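/- arXiv:2303.15183 — 5 statements merged into one kernel-verified Lean document; each statement's English description precedes it below -/
import Mathlib

section
/- Let d ≥ 1, let μ be a probability measure on ℝ^d (i.e., on Fin d → ℝ), and let f : (Fin d → ℝ) → ℝ be differentiable, with the product ∂f_i · ∂f_j of any two first-order partial derivatives integrable with respect to μ. Define c(i,j) = |∫ ∂f_i(x) ∂f_j(x) dμ(x)| for i, j ∈ {1,…,d}, the derivative-based importance imp(u) = Σ_{i∈u} Σ_{j∈u, j≥i} c(i,j) for every subset u ⊆ {1,…,d} (so imp(∅)=0), and the DerSHAP value φ_i = ∫ (∂f_i(x))² dμ(x) + (1/2) Σ_{j≠i} c(i,j). Then for every i ∈ {1,…,d}, the Shapley value of player i for the game imp equals φ_i; that is, (1/d) Σ_{u ⊆ {1,…,d}\{i}} binom(d−1,|u|)⁻¹ (imp(u ∪ {i}) − imp(u)) = φ_i. -/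
open MeasureTheory Finset

lemma shap_weight_sum {α : Type*} (s : Finset α) :
    ∑ u ∈ s.powerset, (((#s).choose (#u) : ℕ) : ℝ)⁻¹ = (#s : ℝ) + 1 := by
  rw [Finset.sum_powerset_apply_card (fun k => (((#s).choose k : ℕ) : ℝ)⁻¹) (x := s)]
  have : ∀ m ∈ range (#s + 1), (#s).choose m • (((#s).choose m : ℕ) : ℝ)⁻¹ = 1 := by
    intro m hm
    have h : (#s).choose m ≠ 0 :=
      (Nat.choose_pos (Nat.lt_succ_iff.mp (Finset.mem_range.mp hm))).ne'
    rw [nsmul_eq_mul]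
    exact mul_inv_cancel₀ (by exact_mod_cast h)
  rw [Finset.sum_congr rfl this]
  simp

lemma shap_weight_lin {α : Type*} [DecidableEq α] (s : Finset α) (a : α → ℝ) :
    ∑ u ∈ s.powerset, (((#s).choose (#u) : ℕ) : ℝ)⁻¹ * ∑ j ∈ u, a j
      = ((#s : ℝ) + 1) / 2 * ∑ j ∈ s, a j := by
  have h : ∑ u ∈ s.powerset, (((#s).choose (#u) : ℕ) : ℝ)⁻¹ * ∑ j ∈ u, a j
      = ∑ u ∈ s.powerset, (((#s).choose (#u) : ℕ) : ℝ)⁻¹ * (∑ j ∈ s, a j - ∑ j ∈ u, a j) := by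
    refine Finset.sum_nbij' (fun u => s \ u) (fun u => s \ u) ?_ ?_ ?_ ?_ ?_
    · intro u _; simp
    · intro u _; simp
    · intro u hu; simpa using hu
    · intro u hu; simpa using hu
    · intro u hu
      have hu' := Finset.mem_powerset.mp hu
      rw [Finset.card_sdiff_of_subset hu', Nat.choose_symm (Finset.card_le_card hu'),
        ← Finset.sum_sdiff hu']
      ring
  have h2 := shap_weight_sum s
  simp only [mul_sub, Finset.sum_sub_distrib, ← Finset.sum_mul] at h
  rw [h2] at h
  linarith

lemma shap_marginal {α : Type*} [LinearOrder α] (c : α → α → ℝ) (hs : ∀ i j, c i j = c j i)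
    (i : α) (u : Finset α) (hi : i ∉ u) :
    (∑ k ∈ insert i u, ∑ j ∈ (insert i u).filter (fun j => k ≤ j), c k j)
      - ∑ k ∈ u, ∑ j ∈ u.filter (fun j => k ≤ j), c k j = c i i + ∑ j ∈ u, c i j := by
  simp only [Finset.sum_filter, Finset.sum_insert hi, Finset.sum_add_distrib, le_refl, if_true]
  have : ∑ j ∈ u, c i j
      = ∑ j ∈ u, (if i ≤ j then c i j else 0) + ∑ k ∈ u, (if k ≤ i then c k i else 0) := by
    rw [← Finset.sum_add_distrib]
    refine Finset.sum_congr rfl fun j hj => ?_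
    have hne : i ≠ j := fun h => hi (h ▸ hj)
    rcases lt_or_gt_of_ne hne with h | h
    · simp [h.le, h.not_ge]
    · simp [h.le, h.not_ge, hs i j]
  rw [this]
  ring

/-- The Shapley value of player `i` for the derivative-based importance function `imp`
equals the DerSHAP value `φ i`. -/
theorem dershap_is_shapley_value
    (d : ℕ) (hd : 1 ≤ d)
    (μ : Measure (Fin d → ℝ)) [IsProbabilityMeasure μ]
    (f : (Fin d → ℝ) → ℝ) (hf : Differentiable ℝ f)
    (hint : ∀ i j : Fin d,
      Integrable (fun x => fderiv ℝ f x (Pi.single i 1) * fderiv ℝ f x (Pi.single j 1)) μ)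
    (c : Fin d → Fin d → ℝ)
    (hc : ∀ i j : Fin d,
      c i j = |∫ x, fderiv ℝ f x (Pi.single i 1) * fderiv ℝ f x (Pi.single j 1) ∂μ|)
    (imp : Finset (Fin d) → ℝ)
    (himp : ∀ u : Finset (Fin d),
      imp u = ∑ i ∈ u, ∑ j ∈ u.filter (fun j => i ≤ j), c i j)
    (φ : Fin d → ℝ)
    (hφ : ∀ i : Fin d,
      φ i = (∫ x, (fderiv ℝ f x (Pi.single i 1)) ^ 2 ∂μ)
        + (1 / 2) * ∑ j ∈ univ.filter (fun j => j ≠ i), c i j)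
    (i : Fin d) :
    (1 / d : ℝ) * ∑ u ∈ ((univ : Finset (Fin d)) \ {i}).powerset,
        (((d - 1).choose u.card : ℕ) : ℝ)⁻¹ * (imp (insert i u) - imp u)
      = φ i := by
  have hsym : ∀ i j, c i j = c j i := by
    intro i j
    simp only [hc, mul_comm]
  have hcard : #((univ : Finset (Fin d)) \ {i}) = d - 1 := by
    rw [Finset.card_sdiff_of_subset (Finset.subset_univ _)]
    simp
  have hcast : ((d - 1 : ℕ) : ℝ) + 1 = d := by
    exact_mod_cast Nat.sub_add_cancel hd
  have hmarg : ∀ u ∈ ((univ : Finset (Fin d)) \ {i}).powerset,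
      (((d - 1).choose u.card : ℕ) : ℝ)⁻¹ * (imp (insert i u) - imp u)
      = (((d - 1).choose u.card : ℕ) : ℝ)⁻¹ * c i i
        + (((d - 1).choose u.card : ℕ) : ℝ)⁻¹ * ∑ j ∈ u, c i j := by
    intro u hu
    have hi : i ∉ u := fun h => by
      have := Finset.mem_powerset.mp hu h
      simp at this
    rw [himp, himp, shap_marginal c hsym i u hi, mul_add]
  have h1 := shap_weight_sum ((univ : Finset (Fin d)) \ {i})
  have h2 := shap_weight_lin ((univ : Finset (Fin d)) \ {i}) (c i)
  rw [hcard, hcast] at h1 h2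
  have hset : (univ : Finset (Fin d)) \ {i} = univ.filter (fun j => j ≠ i) := by
    ext j; simp
  have hii : c i i = ∫ x, (fderiv ℝ f x (Pi.single i 1)) ^ 2 ∂μ := by
    rw [hc, abs_of_nonneg (integral_nonneg fun x => mul_self_nonneg _)]
    simp only [pow_two]
  have hd0 : (d : ℝ) ≠ 0 := by
    exact_mod_cast (by omega : d ≠ 0)
  rw [Finset.sum_congr rfl hmarg, Finset.sum_add_distrib, ← Finset.sum_mul, h1, h2, hφ, ← hii,
    ← hset]
  field_simp
end

section
/- Let d ≥ 1, let μ be a probability measure on ℝ^d (i.e., on Fin d → ℝ), and let f : (Fin d → ℝ) → ℝ be differentiable, with the product ∂f_i · ∂f_j of any two first-order partial derivatives integrable with respect to μ. Define c(i,j) = |∫ ∂f_i(x) ∂f_j(x) dμ(x)|, imp(u) = Σ_{i∈u} Σ_{j∈u, j≥i} c(i,j) for u ⊆ {1,…,d}, and φ_i = ∫ (∂f_i(x))² dμ(x) + (1/2) Σ_{j≠i} c(i,j). Then the DerSHAP values satisfy the efficiency property: Σ_{i=1}^d φ_i = imp({1,…,d}). -/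
open MeasureTheory Finset

/-- Efficiency property of the DerSHAP values: they sum to the derivative-based
importance of the full index set. -/
theorem dershap_efficiency
    (d : ℕ) (hd : 1 ≤ d)
    (μ : Measure (Fin d → ℝ)) [IsProbabilityMeasure μ]
    (f : (Fin d → ℝ) → ℝ) (hf : Differentiable ℝ f)
    (hint : ∀ i j : Fin d,
      Integrable (fun x => fderiv ℝ f x (Pi.single i 1) * fderiv ℝ f x (Pi.single j 1)) μ)
    (c : Fin d → Fin d → ℝ)
    (hc : ∀ i j : Fin d,
      c i j = |∫ x, fderiv ℝ f x (Pi.single i 1) * fderiv ℝ f x (Pi.single j 1) ∂μ|)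
    (imp : Finset (Fin d) → ℝ)
    (himp : ∀ u : Finset (Fin d),
      imp u = ∑ i ∈ u, ∑ j ∈ u.filter (fun j => i ≤ j), c i j)
    (φ : Fin d → ℝ)
    (hφ : ∀ i : Fin d,
      φ i = (∫ x, (fderiv ℝ f x (Pi.single i 1)) ^ 2 ∂μ)
        + (1 / 2) * ∑ j ∈ univ.filter (fun j => j ≠ i), c i j) :
    ∑ i : Fin d, φ i = imp univ := by
  have hsymm : ∀ i j, c i j = c j i := by
    intro i j
    rw [hc, hc]
    simp only [mul_comm]
  have hdiag : ∀ i, (∫ x, (fderiv ℝ f x (Pi.single i 1)) ^ 2 ∂μ) = c i i := by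
    intro i
    rw [hc, abs_of_nonneg (integral_nonneg fun x => mul_self_nonneg _)]
    simp only [pow_two]
  have hphi : ∀ i, φ i = ∑ j, ((1 / 2) * (if i ≤ j then c i j else 0)
      + (1 / 2) * (if j ≤ i then c j i else 0)) := by
    intro i
    have h1 : c i i = ∑ j, (if j = i then c i j else 0) := by simp
    rw [hφ, hdiag, h1, Finset.sum_filter, Finset.mul_sum, ← Finset.sum_add_distrib]
    refine Finset.sum_congr rfl fun j _ => ?_
    rcases lt_trichotomy i j with h | h | h
    · simp [h.le, h.ne', not_le.mpr h]
    · subst h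
      simp only [le_refl, if_true, ne_eq, not_true_eq_false, if_false]
      ring
    · simp [h.le, h.ne, not_le.mpr h, hsymm i j]
  have hswap : ∑ i, ∑ j, (1 / 2 : ℝ) * (if j ≤ i then c j i else 0)
      = ∑ i, ∑ j, (1 / 2 : ℝ) * (if i ≤ j then c i j else 0) := Finset.sum_comm
  simp only [hphi, Finset.sum_add_distrib]
  rw [hswap, himp]
  simp only [Finset.sum_filter, ← Finset.mul_sum]
  ring
end

section
/- Let d ≥ 1, let μ be a probability measure on ℝ^d (i.e., on Fin d → ℝ), and let f : (Fin d → ℝ) → ℝ be differentiable, with the product ∂f_i · ∂f_j of any two first-order partial derivatives integrable with respect to μ. Define c(i,j) = |∫ ∂f_i(x) ∂f_j(x) dμ(x)|, imp(u) = Σ_{i∈u} Σ_{j∈u, j≥i} c(i,j) for u ⊆ {1,…,d}, and φ_i = ∫ (∂f_i(x))² dμ(x) + (1/2) Σ_{j≠i} c(i,j). Fix i ∈ {1,…,d}. If imp(u ∪ {i}) = imp(u) for every subset u ⊆ {1,…,d} \ {i}, then φ_i = 0 (the dummy property). -/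
open MeasureTheory Finset

/-- Dummy property of the DerSHAP values: if adding input `i` never changes the
derivative-based importance, then the DerSHAP value of `i` is zero. -/
theorem dershap_dummy
    (d : ℕ) (hd : 1 ≤ d)
    (μ : Measure (Fin d → ℝ)) [IsProbabilityMeasure μ]
    (f : (Fin d → ℝ) → ℝ) (hf : Differentiable ℝ f)
    (hint : ∀ i j : Fin d,
      Integrable (fun x => fderiv ℝ f x (Pi.single i 1) * fderiv ℝ f x (Pi.single j 1)) μ)
    (c : Fin d → Fin d → ℝ)
    (hc : ∀ i j : Fin d,
      c i j = |∫ x, fderiv ℝ f x (Pi.single i 1) * fderiv ℝ f x (Pi.single j 1) ∂μ|)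
    (imp : Finset (Fin d) → ℝ)
    (himp : ∀ u : Finset (Fin d),
      imp u = ∑ i ∈ u, ∑ j ∈ u.filter (fun j => i ≤ j), c i j)
    (φ : Fin d → ℝ)
    (hφ : ∀ i : Fin d,
      φ i = (∫ x, (fderiv ℝ f x (Pi.single i 1)) ^ 2 ∂μ)
        + (1 / 2) * ∑ j ∈ univ.filter (fun j => j ≠ i), c i j)
    (i : Fin d)
    (hdummy : ∀ u : Finset (Fin d), u ⊆ univ \ {i} → imp (insert i u) = imp u) :
    φ i = 0 := by
  have hsymm : ∀ a b, c a b = c b a := by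
    intro a b
    rw [hc, hc]
    simp only [mul_comm]
  have h0 : c i i = 0 := by
    have h := hdummy ∅ (by simp)
    rw [himp, himp] at h
    simpa [Finset.sum_filter] using h
  have h1 : ∀ j, j ≠ i → c i j = 0 := by
    intro j hj
    have h := hdummy {j} (by simpa using hj)
    rw [himp, himp] at h
    have hij : i ∉ ({j} : Finset (Fin d)) := by simpa using hj.symm
    simp only [Finset.sum_filter, Finset.sum_insert hij, Finset.sum_singleton, le_refl,
      if_true, h0] at h
    rcases lt_or_gt_of_ne hj with hlt | hlt
    · rw [if_neg (not_le.mpr hlt), if_pos hlt.le] at h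
      rw [hsymm]
      linarith
    · rw [if_pos hlt.le, if_neg (not_le.mpr hlt)] at h
      linarith
  have h2 : ∑ j ∈ univ.filter (fun j => j ≠ i), c i j = 0 :=
    Finset.sum_eq_zero fun j hj => h1 j (by simpa using hj)
  have h3 : (∫ x, (fderiv ℝ f x (Pi.single i 1)) ^ 2 ∂μ) = 0 := by
    rw [hc, abs_eq_zero] at h0
    simpa only [sq] using h0
  rw [hφ, h2, h3]
  simp
end

section
/- Let d ≥ 1, let μ be a probability measure on ℝ^d (i.e., on Fin d → ℝ), and let f : (Fin d → ℝ) → ℝ be differentiable, with the product ∂f_i · ∂f_j of any two first-order partial derivatives integrable with respect to μ. Define c(i,j) = |∫ ∂f_i(x) ∂f_j(x) dμ(x)|, imp(u) = Σ_{i∈u} Σ_{j∈u, j≥i} c(i,j) for u ⊆ {1,…,d}, and φ_i = ∫ (∂f_i(x))² dμ(x) + (1/2) Σ_{j≠i} c(i,j). Fix distinct indices k₁, k₂ ∈ {1,…,d}. If imp(u ∪ {k₁}) = imp(u ∪ {k₂}) for every subset u ⊆ {1,…,d} with u ∩ {k₁,k₂} = ∅, then φ_{k₁} = φ_{k₂}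 (the symmetry property). -/
open MeasureTheory Finset

/-- Symmetry property of the DerSHAP values: if inputs `k₁` and `k₂` always contribute
equally to the derivative-based importance, then their DerSHAP values are equal. -/
theorem dershap_symmetry
    (d : ℕ) (hd : 1 ≤ d)
    (μ : Measure (Fin d → ℝ)) [IsProbabilityMeasure μ]
    (f : (Fin d → ℝ) → ℝ) (hf : Differentiable ℝ f)
    (hint : ∀ i j : Fin d,
      Integrable (fun x => fderiv ℝ f x (Pi.single i 1) * fderiv ℝ f x (Pi.single j 1)) μ)
    (c : Fin d → Fin d → ℝ)
    (hc : ∀ i j : Fin d,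
      c i j = |∫ x, fderiv ℝ f x (Pi.single i 1) * fderiv ℝ f x (Pi.single j 1) ∂μ|)
    (imp : Finset (Fin d) → ℝ)
    (himp : ∀ u : Finset (Fin d),
      imp u = ∑ i ∈ u, ∑ j ∈ u.filter (fun j => i ≤ j), c i j)
    (φ : Fin d → ℝ)
    (hφ : ∀ i : Fin d,
      φ i = (∫ x, (fderiv ℝ f x (Pi.single i 1)) ^ 2 ∂μ)
        + (1 / 2) * ∑ j ∈ univ.filter (fun j => j ≠ i), c i j)
    (k₁ k₂ : Fin d) (hne : k₁ ≠ k₂)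
    (hsym : ∀ u : Finset (Fin d), u ∩ {k₁, k₂} = ∅ →
      imp (insert k₁ u) = imp (insert k₂ u)) :
    φ k₁ = φ k₂ := by
  have hcomm : ∀ i j, c i j = c j i := by
    intro i j
    rw [hc, hc]
    simp only [mul_comm]
  have hsq : ∀ i, (∫ x, (fderiv ℝ f x (Pi.single i 1)) ^ 2 ∂μ) = c i i := by
    intro i
    rw [hc, abs_of_nonneg (integral_nonneg fun x => mul_self_nonneg _)]
    simp only [sq]
  have h1 : ∀ k, imp (insert k ∅) = c k k := by
    intro k
    rw [himp]
    simp [Finset.sum_filter]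
  have h2 : ∀ k j, k ≠ j → imp (insert k {j}) = c k k + c j j + c k j := by
    intro k j hkj
    have hk : k ∉ ({j} : Finset (Fin d)) := by simpa using hkj
    rw [himp]
    simp only [Finset.sum_filter, Finset.sum_insert hk, Finset.sum_singleton, le_refl, if_true]
    rcases lt_or_gt_of_ne hkj with h | h
    · rw [if_pos h.le, if_neg (not_le.mpr h)]; ring
    · rw [if_neg (not_le.mpr h), if_pos h.le, hcomm j k]; ring
  have hd1 : c k₁ k₁ = c k₂ k₂ := by
    rw [← h1, ← h1]
    exact hsym ∅ (by simp)
  have hd2 : ∀ j, j ≠ k₁ → j ≠ k₂ → c k₁ j = c k₂ j := by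
    intro j hj1 hj2
    have h := hsym {j} (by simp [hj1, hj2])
    rw [h2 _ _ hj1.symm, h2 _ _ hj2.symm] at h
    linarith
  have hsum : ∀ k, ∑ j ∈ univ.filter (fun j => j ≠ k), c k j = ∑ j, c k j - c k k := by
    intro k
    rw [Finset.filter_ne' univ k, ← Finset.add_sum_erase univ (c k) (Finset.mem_univ k)]
    ring
  have htot : ∑ j, c k₁ j = ∑ j, c k₂ j := by
    rw [← Equiv.sum_comp (Equiv.swap k₁ k₂) (c k₂)]
    refine Finset.sum_congr rfl fun j _ => ?_
    by_cases hj1 : j = k₁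
    · subst hj1; rw [Equiv.swap_apply_left, hd1]
    by_cases hj2 : j = k₂
    · subst hj2; rw [Equiv.swap_apply_right, hcomm]
    rw [Equiv.swap_apply_of_ne_of_ne hj1 hj2, hd2 j hj1 hj2]
  rw [hφ, hφ, hsq, hsq, hsum, hsum, htot, hd1]
end

section
/- Let d ≥ 1, let w₁,…,w_d be an orthonormal family of vectors in ℝ^d, let λ₁,…,λ_d be nonnegative real numbers, let ε ≥ 0, and let S ⊆ {1,…,d} with |S| = k, such that λ_i ≤ ε for every i ∉ S. Define M = Σ_{i=1}^d λ_i w_i w_iᵀ and M̃ = Σ_{i∈S} λ_i w_i w_iᵀ, let e ∈ ℝ^d be the vector of all ones, and define the vectors Φ = (1/2) M e + (1/2) diag(M) and Φ̃ = (1/2) M̃ e + (1/2) diag(M̃), where diag(A) ∈ ℝ^d denotes the vector of diagonal entries of A. Then ‖Φ − Φ̃‖₂ ≤ (d−k) ε √d, where ‖·‖₂ is the Euclidean norm on ℝ^d. -/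
open Finset

/-- Error bound between the vector of derivative-based Shapley values `Φ` computed from
`M = ∑_i λ_i wᵢ wᵢᵀ` and the approximate values `Φ̃` computed from the truncation
`M̃ = ∑_{i∈S} λ_i wᵢ wᵢᵀ`: `‖Φ - Φ̃‖₂ ≤ (d - k) ε √d`. -/
theorem dershap_truncation_error_bound
    (d : ℕ) (hd : 1 ≤ d)
    (w : Fin d → Fin d → ℝ)
    (hw : ∀ i j : Fin d, ∑ p, w i p * w j p = if i = j then 1 else 0)
    (lam : Fin d → ℝ) (hlam : ∀ i, 0 ≤ lam i)
    (ε : ℝ) (hε : 0 ≤ ε)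
    (S : Finset (Fin d)) (k : ℕ) (hk : S.card = k)
    (hsmall : ∀ i, i ∉ S → lam i ≤ ε)
    (M Mt : Matrix (Fin d) (Fin d) ℝ)
    (hM : ∀ j l : Fin d, M j l = ∑ i : Fin d, lam i * (w i j * w i l))
    (hMt : ∀ j l : Fin d, Mt j l = ∑ i ∈ S, lam i * (w i j * w i l))
    (Φ Φt : Fin d → ℝ)
    (hΦ : ∀ j : Fin d, Φ j = (1 / 2) * (∑ l : Fin d, M j l) + (1 / 2) * M j j)
    (hΦt : ∀ j : Fin d, Φt j = (1 / 2) * (∑ l : Fin d, Mt j l) + (1 / 2) * Mt j j) :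
    Real.sqrt (∑ j : Fin d, (Φ j - Φt j) ^ 2) ≤ ((d : ℝ) - k) * ε * Real.sqrt d := by
  classical
  have hn : ∀ i, ∑ p, w i p ^ 2 = 1 := by
    intro i
    have := hw i i
    simpa [pow_two] using this
  have hle : ∀ i j, w i j ^ 2 ≤ 1 := by
    intro i j
    rw [← hn i]
    exact Finset.single_le_sum (f := fun p => w i p ^ 2) (fun p _ => sq_nonneg _) (mem_univ j)
  have hs : ∀ i, (∑ p, w i p) ^ 2 ≤ (d : ℝ) := by
    intro i
    have := sq_sum_le_card_mul_sum_sq (s := (univ : Finset (Fin d))) (f := fun p => w i p)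
    simpa [hn i] using this
  have hd' : (1 : ℝ) ≤ d := by exact_mod_cast hd
  set v : Fin d → Fin d → ℝ := fun i j => (1 / 2) * (w i j * ∑ p, w i p) + (1 / 2) * w i j ^ 2
    with hv
  have hvn : ∀ i, ∑ j, v i j ^ 2 ≤ (d : ℝ) := by
    intro i
    have h1 : ∀ j, v i j ^ 2 ≤ (1 / 2) * ((∑ p, w i p) ^ 2 + 1) * w i j ^ 2 := by
      intro j
      have h2 : w i j ^ 2 * w i j ^ 2 ≤ 1 * w i j ^ 2 :=
        mul_le_mul_of_nonneg_right (hle i j) (sq_nonneg _)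
      simp only [hv]
      nlinarith [sq_nonneg (w i j * (∑ p, w i p) - w i j ^ 2)]
    calc ∑ j, v i j ^ 2 ≤ ∑ j, (1 / 2) * ((∑ p, w i p) ^ 2 + 1) * w i j ^ 2 :=
          Finset.sum_le_sum (fun j _ => h1 j)
      _ = (1 / 2) * ((∑ p, w i p) ^ 2 + 1) := by rw [← Finset.mul_sum, hn i, mul_one]
      _ ≤ d := by linarith [hs i]
  have hcomb : ∀ (T : Finset (Fin d)) (j : Fin d),
      (1 / 2) * (∑ l : Fin d, ∑ i ∈ T, lam i * (w i j * w i l))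
        + (1 / 2) * ∑ i ∈ T, lam i * (w i j * w i j) = ∑ i ∈ T, lam i * v i j := by
    intro T j
    rw [Finset.sum_comm, Finset.mul_sum, Finset.mul_sum, ← Finset.sum_add_distrib]
    refine Finset.sum_congr rfl fun i _ => ?_
    simp only [hv]
    rw [← Finset.mul_sum, ← Finset.mul_sum]
    ring
  have hdiff : ∀ j, Φ j - Φt j = ∑ i ∈ Sᶜ, lam i * v i j := by
    intro j
    rw [hΦ, hΦt]
    simp only [hM, hMt]
    rw [hcomb, hcomb, ← Finset.sum_add_sum_compl S]
    ring
  have hc : ((Sᶜ.card : ℕ) : ℝ) = (d : ℝ) - k := by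
    have := Finset.card_add_card_compl S
    rw [Fintype.card_fin, hk] at this
    have h : (k : ℝ) + (Sᶜ.card : ℝ) = d := by exact_mod_cast this
    linarith
  rw [← hc]
  apply Real.sqrt_le_iff.mpr
  refine ⟨by positivity, ?_⟩
  rw [mul_pow, Real.sq_sqrt (by positivity)]
  calc ∑ j, (Φ j - Φt j) ^ 2
      ≤ ∑ j, (Sᶜ.card : ℝ) * ∑ i ∈ Sᶜ, (lam i * v i j) ^ 2 := by
        refine Finset.sum_le_sum fun j _ => ?_
        rw [hdiff]
        exact sq_sum_le_card_mul_sum_sq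
    _ = (Sᶜ.card : ℝ) * ∑ i ∈ Sᶜ, lam i ^ 2 * ∑ j, v i j ^ 2 := by
        rw [← Finset.mul_sum, Finset.sum_comm]
        simp only [mul_pow, Finset.mul_sum]
    _ ≤ (Sᶜ.card : ℝ) * ∑ i ∈ Sᶜ, ε ^ 2 * d := by
        refine mul_le_mul_of_nonneg_left (Finset.sum_le_sum fun i hi => ?_) (by positivity)
        have h1 : lam i ^ 2 ≤ ε ^ 2 :=
          pow_le_pow_left₀ (hlam i) (hsmall i (Finset.mem_compl.mp hi)) 2
        exact mul_le_mul h1 (hvn i) (Finset.sum_nonneg fun j _ => sq_nonneg _) (sq_nonneg _)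
    _ = ((Sᶜ.card : ℝ) * ε) ^ 2 * d := by
        rw [Finset.sum_const, nsmul_eq_mul]
        ring
end
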